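/- Let κ ≥ 0 and let ρ₊(η,κ) (for η ≥ −κ²) and ρ₋(η,κ) (for η ≤ −κ²) denote the unique solutions in [1,∞) of η − G(ρ) + κ²P₋(ρ) = 0 and η + G(ρ) + κ²P₊(ρ) = 0 respectively. Then the following bounds hold: (i) for η ≥ −κ²: (1/4)(κ + η) ≤ ρ₊(η,κ) ≤ 1 + κ² + η; moreover if −κ² ≤ η ≤ 0 then ρ₊(η,κ)·|η| ≤ κ² and 1 ≤ ρ₊(η,κ) ≤ 1 + κ; (ii) for η ≤ −κ²: (1/4)·|η|/(1+κ²) ≤ ρ₋(η,κ) ≤ (1 + |η|)/(1 + κ²). -/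

import Mathlib

/-!
Write `a = √y`, `b = √(y - 1)` and `s = a + b`, so that `a² = b² + 1`, `(a + b)(a - b) = 1`,
`P₊(y) = (a + b)²`, `P₋(y) = (a - b)²` and `G(y) = ab + log s`. From `0 ≤ log s ≤ s - 1` and
`b ≤ a` one gets `b² ≤ ab ≤ G(y) ≤ 2y`. Each implicit relation expresses `η` explicitly through
`y` and `κ`, and every bound then becomes a polynomial inequality in `a`, `b`, `κ`:

* `y - 1 = b² ≤ G` and `P₋ ≤ 1` give the upper bound on `ρ₊`;
* `κ - κ²P₋ ≤ (a + b)²/4 ≤ y`, by completing the square, gives its lower bound;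
* for `η ≤ 0` one has `y P₋ = (a(a - b))² ≤ 1`, and `b² ≤ G ≤ κ²P₋` gives `b(a + b) ≤ κ`;
* `y ≤ P₊ ≤ 4y` and `y - 1 ≤ G ≤ 2y` give both bounds on `ρ₋`.
-/

noncomputable section

/-- `G(y) = √(y(y−1)) + ln(√y + √(y−1))`. -/
def Gf (y : ℝ) : ℝ := Real.sqrt (y * (y - 1)) + Real.log (Real.sqrt y + Real.sqrt (y - 1))

/-- `P₊(y) = 2y − 1 + 2√(y(y−1))`. -/
def Pp (y : ℝ) : ℝ := 2 * y - 1 + 2 * Real.sqrt (y * (y - 1))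

/-- `P₋(y) = 2y − 1 − 2√(y(y−1))`. -/
def Pm (y : ℝ) : ℝ := 2 * y - 1 - 2 * Real.sqrt (y * (y - 1))

/-- The substitution `a = √y`, `b = √(y - 1)`, together with two-sided bounds on `G`. -/
lemma exists_sqrt_coords (y : ℝ) (hy : 1 ≤ y) :
    ∃ a b : ℝ, 1 ≤ a ∧ 0 ≤ b ∧ b ≤ a ∧ y = a ^ 2 ∧ a ^ 2 = b ^ 2 + 1 ∧
      Pp y = (a + b) ^ 2 ∧ Pm y = (a - b) ^ 2 ∧ a * b ≤ Gf y ∧ Gf y ≤ 2 * a ^ 2 := by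
  have ha2 : Real.sqrt y ^ 2 = y := Real.sq_sqrt (by linarith)
  have hb2 : Real.sqrt (y - 1) ^ 2 = y - 1 := Real.sq_sqrt (by linarith)
  have hmul : Real.sqrt (y * (y - 1)) = Real.sqrt y * Real.sqrt (y - 1) :=
    Real.sqrt_mul (by linarith) _
  have ha : 1 ≤ Real.sqrt y := Real.one_le_sqrt.mpr hy
  have hb : 0 ≤ Real.sqrt (y - 1) := Real.sqrt_nonneg _
  have hba : Real.sqrt (y - 1) ≤ Real.sqrt y := Real.sqrt_le_sqrt (by linarith)
  have hlog0 : 0 ≤ Real.log (Real.sqrt y + Real.sqrt (y - 1)) :=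
    Real.log_nonneg (by linarith)
  have hlog1 := Real.log_le_sub_one_of_pos
    (show 0 < Real.sqrt y + Real.sqrt (y - 1) by linarith)
  refine ⟨Real.sqrt y, Real.sqrt (y - 1), ha, hb, hba, ha2.symm, by linarith, ?_, ?_, ?_, ?_⟩
  · rw [Pp, hmul]; linarith [add_sq (Real.sqrt y) (Real.sqrt (y - 1))]
  · rw [Pm, hmul]; linarith [sub_sq (Real.sqrt y) (Real.sqrt (y - 1))]
  · rw [Gf, hmul]; linarith
  · rw [Gf, hmul]
    -- `ab ≤ a²` and `log (a + b) ≤ 2a - 1 ≤ a²`.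
    nlinarith [sq_nonneg (Real.sqrt y - 1),
      mul_le_mul_of_nonneg_left hba (by linarith : 0 ≤ Real.sqrt y)]

/-- Bounds for the solutions `ρ₊(η,κ)` of `η − G(ρ) + κ²P₋(ρ) = 0` (for `η ≥ −κ²`) and
`ρ₋(η,κ)` of `η + G(ρ) + κ²P₊(ρ) = 0` (for `η ≤ −κ²`) in `[1,∞)`:
(i) `(1/4)(κ + η) ≤ ρ₊ ≤ 1 + κ² + η`, and if moreover `−κ² ≤ η ≤ 0` then `ρ₊·|η| ≤ κ²`
and `1 ≤ ρ₊ ≤ 1 + κ`; (ii) `(1/4)·|η|/(1+κ²) ≤ ρ₋ ≤ (1 + |η|)/(1 + κ²)`. -/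
theorem rho_bounds (κ η y : ℝ) (hκ : 0 ≤ κ) :
    ((-κ ^ 2 ≤ η ∧ 1 ≤ y ∧ η - Gf y + κ ^ 2 * Pm y = 0) →
      ((κ + η) / 4 ≤ y ∧ y ≤ 1 + κ ^ 2 + η ∧
        (η ≤ 0 → y * |η| ≤ κ ^ 2 ∧ 1 ≤ y ∧ y ≤ 1 + κ))) ∧
    ((η ≤ -κ ^ 2 ∧ 1 ≤ y ∧ η + Gf y + κ ^ 2 * Pp y = 0) →
      (|η| / (1 + κ ^ 2) / 4 ≤ y ∧ y ≤ (1 + |η|) / (1 + κ ^ 2))) := by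
  constructor
  · rintro ⟨hη, hy, h⟩
    obtain ⟨a, b, ha, hb, hba, rfl, hab, -, hPm, hG1, hG2⟩ := exists_sqrt_coords y hy
    rw [hPm] at h
    have hinv : (a + b) * (a - b) = 1 := by linear_combination hab
    have hd0 : 0 ≤ a - b := by linarith
    have hd1 : a - b ≤ 1 := by nlinarith
    have hbab : b ^ 2 ≤ a * b := by nlinarith
    have hPm1 : (a - b) ^ 2 ≤ 1 := pow_le_one₀ hd0 hd1
    have hs4 : (a + b) ^ 2 ≤ 4 * a ^ 2 := by nlinarith
    refine ⟨?_, ?_, fun hη0 => ⟨?_, hy, ?_⟩⟩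
    · -- `(κ(a - b) - (a + b)/2)² ≥ 0` expands to `κ - κ²(a - b)² ≤ (a + b)²/4`.
      have hsq : κ - κ ^ 2 * (a - b) ^ 2 ≤ (a + b) ^ 2 / 4 := by
        have hexp : (κ * (a - b) - (a + b) / 2) ^ 2
            = κ ^ 2 * (a - b) ^ 2 - κ + (a + b) ^ 2 / 4 := by
          linear_combination (-κ) * hinv
        linarith [sq_nonneg (κ * (a - b) - (a + b) / 2)]
      linarith [sq_nonneg a]
    · linarith [mul_le_mul_of_nonneg_left hPm1 (sq_nonneg κ)]
    · rw [abs_of_nonpos hη0]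
      have hle : (a * (a - b)) ^ 2 ≤ 1 := pow_le_one₀ (by nlinarith) (by nlinarith)
      have hG0 : 0 ≤ a ^ 2 * Gf (a ^ 2) := mul_nonneg (sq_nonneg a) (by nlinarith)
      have hκle := mul_le_mul_of_nonneg_left hle (sq_nonneg κ)
      have heq : a ^ 2 * -η = κ ^ 2 * (a * (a - b)) ^ 2 - a ^ 2 * Gf (a ^ 2) := by
        linear_combination (-a ^ 2) * h
      linarith
    · -- `b² ≤ G ≤ (κ(a - b))²`, so `b ≤ κ(a - b)`, and multiplying by `a + b` gives
      -- `b² ≤ b(a + b) ≤ κ`.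
      have h1 : b ^ 2 ≤ (κ * (a - b)) ^ 2 := by rw [mul_pow]; linarith
      have h2 : b ≤ κ * (a - b) := (le_abs_self b).trans (abs_le_of_sq_le_sq h1 (mul_nonneg hκ hd0))
      have h3 : b * (a + b) ≤ κ := by
        calc b * (a + b) ≤ κ * (a - b) * (a + b) :=
              mul_le_mul_of_nonneg_right h2 (by linarith)
          _ = κ := by linear_combination κ * hinv
      nlinarith
  · rintro ⟨hη, hy, h⟩
    obtain ⟨a, b, ha, hb, hba, rfl, hab, hPp, -, hG1, hG2⟩ := exists_sqrt_coords y hy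
    rw [hPp] at h
    have hbab : b ^ 2 ≤ a * b := by nlinarith
    have hs4 : (a + b) ^ 2 ≤ 4 * a ^ 2 := by nlinarith
    have hs1 : a ^ 2 ≤ (a + b) ^ 2 := by nlinarith
    have hpos : 0 < 1 + κ ^ 2 := by positivity
    rw [abs_of_nonpos (by nlinarith)]
    constructor
    · rw [div_div, div_le_iff₀ (by positivity)]
      nlinarith [mul_le_mul_of_nonneg_left hs4 (sq_nonneg κ)]
    · rw [le_div_iff₀ hpos]
      nlinarith [mul_le_mul_of_nonneg_left hs1 (sq_nonneg κ)]
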